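/- Every element γ ≠ I₄ of finite order in Γ₆^bil is conjugate within Sp(4,ℤ) either to ζ or to ζ·[0,1;0]; that is, there exists δ ∈ Sp(4,ℤ) with δγδ⁻¹ = ζ or δγδ⁻¹ = ζ·[0,1;0]. -/

import Mathlib

open Matrix Polynomial

/-- 4×4 integer matrices. -/
abbrev M4 : Type := Matrix (Fin 4) (Fin 4) ℤ

/-- The standard symplectic form matrix J = [[0, I₂], [−I₂, 0]]. -/
def J4 : M4 := !![0,0,1,0; 0,0,0,1; -1,0,0,0; 0,-1,0,0]

/-- Sp(4,ℤ): integer matrices γ with ᵗγ·J·γ = J. -/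
def Sp4Z : Set M4 := {γ | γᵀ * J4 * γ = J4}

/-- The congruence pattern [[6,1,6,6],[6,6,6,36],[6,1,6,6],[1,1,1,6]]. -/
def pat6 : Matrix (Fin 4) (Fin 4) ℤ := !![6,1,6,6; 6,6,6,36; 6,1,6,6; 1,1,1,6]

/-- Γ₆^♮: elements of Sp(4,ℤ) with γ − I₄ entrywise in the pattern. -/
def Gamma6nat : Set M4 := {γ | γ ∈ Sp4Z ∧ ∀ i j, pat6 i j ∣ (γ - 1) i j}

/-- ζ = diag(−1,1,−1,1). -/
def zetaM : M4 := !![-1,0,0,0; 0,1,0,0; 0,0,-1,0; 0,0,0,1]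

/-- Γ₆^bil = Γ₆^♮ ∪ ζ·Γ₆^♮. -/
def Gamma6bil : Set M4 := Gamma6nat ∪ (fun γ => zetaM * γ) '' Gamma6nat

/-- The Heisenberg matrix [m,n;k] = [[1,m,0,0],[0,1,0,0],[0,n,1,0],[n,k,−m,1]]. -/
def Hmat (m n k : ℤ) : M4 := !![1,m,0,0; 0,1,0,0; 0,n,1,0; n,k,-m,1]

/-- All entries of `A` are divisible by `m`. -/
def DivM (m : ℤ) (A : M4) : Prop := ∀ i j, m ∣ A i j

lemma DivM.add {m : ℤ} {A B : M4} (hA : DivM m A) (hB : DivM m B) : DivM m (A + B) := by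
  intro i j
  simpa using dvd_add (hA i j) (hB i j)

lemma DivM.mul {m n : ℤ} {A B : M4} (hA : DivM m A) (hB : DivM n B) : DivM (m * n) (A * B) := by
  intro i j
  rw [Matrix.mul_apply]
  exact Finset.dvd_sum fun k _ => mul_dvd_mul (hA i k) (hB k j)

lemma DivM.one (A : M4) : DivM 1 A := fun _ _ => one_dvd _

lemma DivM.mul_right {m : ℤ} {A : M4} (hA : DivM m A) (B : M4) : DivM m (A * B) := by
  simpa using hA.mul (DivM.one B)

lemma DivM.mul_left {m : ℤ} {A : M4} (hA : DivM m A) (B : M4) : DivM m (B * A) := by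
  simpa using (DivM.one B).mul hA

lemma DivM.pow_sub {m : ℤ} {A B : M4} (h : DivM m (A - B)) (n : ℕ) : DivM m (A ^ n - B ^ n) := by
  induction n with
  | zero => intro i j; simp
  | succ n ih =>
    have e : A ^ (n + 1) - B ^ (n + 1) = A ^ n * (A - B) + (A ^ n - B ^ n) * B := by
      rw [pow_succ, pow_succ]; noncomm_ring
    rw [e]
    exact (h.mul_left _).add (ih.mul_right _)

lemma binom_two (B : M4) (n : ℕ) : ∃ X : M4, (1 + B) ^ n = 1 + (n : ℤ) • B + B * B * X := by
  induction n with
  | zero => exact ⟨0, by simp⟩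
  | succ n ih =>
    obtain ⟨X, hX⟩ := ih
    refine ⟨(n : ℤ) • 1 + X + X * B, ?_⟩
    rw [pow_succ, hX]
    push_cast
    simp only [add_mul, mul_add, add_smul, one_smul, mul_one, one_mul, smul_mul_assoc,
      mul_smul_comm, mul_assoc]
    abel

lemma DivM.pow_lift {q : ℕ} {A : M4} (h : DivM q (A - 1)) : DivM (q * q) (A ^ q - 1) := by
  obtain ⟨X, hX⟩ := binom_two (A - 1) q
  have e : A ^ q - 1 = (q : ℤ) • (A - 1) + (A - 1) * (A - 1) * X := by
    rw [add_sub_cancel] at hX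
    rw [hX]; abel
  rw [e]
  refine DivM.add ?_ ((h.mul h).mul_right X)
  intro i j
  rw [Matrix.smul_apply, smul_eq_mul]
  exact mul_dvd_mul_left _ (h i j)

/-- Prime exponent case of the Minkowski lemma. -/
lemma minkowski_prime {q p : ℕ} (hq : q.Prime) (hp : p.Prime) {A : M4}
    (h : DivM ((q : ℤ) ^ 2) (A - 1)) (hA : A ^ p = 1) : A = 1 := by
  obtain ⟨X, hX⟩ := binom_two (A - 1) p
  set B := A - 1 with hB
  have e : (p : ℤ) • B = - (B * B * X) := by
    have : 1 + B = A := by rw [hB]; abel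
    rw [this, hA] at hX
    have h2 : (p : ℤ) • B + B * B * X = 0 := by
      have := hX.symm
      rw [add_assoc] at this
      simpa using this
    exact eq_neg_of_add_eq_zero_left h2
  have key : ∀ k : ℕ, DivM ((q : ℤ) ^ (k + 2)) B := by
    intro k
    induction k with
    | zero => exact h
    | succ k ih =>
      intro i j
      have h1 : (q : ℤ) ^ (k + 2) * (q : ℤ) ^ (k + 2) ∣ p * B i j := by
        have := ((ih.mul ih).mul_right X) i j
        have e' := congrFun (congrFun e i) j
        rw [Matrix.smul_apply, smul_eq_mul, Matrix.neg_apply] at e'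
        rw [e']
        exact (dvd_neg).2 this
      by_cases hpq : p = q
      · subst hpq
        have hp0 : (p : ℤ) ≠ 0 := by exact_mod_cast hp.ne_zero
        have h2 : (p : ℤ) * ((p : ℤ) ^ (k + 1) * (p : ℤ) ^ (k + 2)) ∣ p * B i j := by
          refine dvd_trans (dvd_of_eq ?_) h1
          ring
        have h3 := (mul_dvd_mul_iff_left hp0).1 h2
        refine dvd_trans ?_ h3
        rw [← pow_add]
        exact pow_dvd_pow _ (by omega)
      · have hc : IsCoprime ((q : ℤ) ^ (k + 2) * (q : ℤ) ^ (k + 2)) (p : ℤ) := by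
          have : IsCoprime (q : ℤ) (p : ℤ) :=
            Nat.isCoprime_iff_coprime.2 ((Nat.coprime_primes hq hp).2 (Ne.symm hpq))
          exact (this.pow_left).mul_left this.pow_left
        refine dvd_trans ?_ (hc.dvd_of_dvd_mul_left h1)
        rw [← pow_add]
        exact pow_dvd_pow _ (by omega)
  have hB0 : B = 0 := by
    ext i j
    rw [Matrix.zero_apply]
    have h1 := key (B i j).natAbs i j
    apply Int.eq_zero_of_dvd_of_natAbs_lt_natAbs h1
    rw [Int.natAbs_pow, Int.natAbs_natCast]
    calc (B i j).natAbs < q ^ (B i j).natAbs := Nat.lt_pow_self hq.one_lt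
      _ ≤ _ := Nat.pow_le_pow_right hq.pos (by omega)
  exact sub_eq_zero.1 hB0

/-- the Minkowski lemma. -/
lemma minkowski {q : ℕ} (hq : q.Prime) (n : ℕ) : ∀ A : M4, 1 ≤ n →
    DivM ((q : ℤ) ^ 2) (A - 1) → A ^ n = 1 → A = 1 := by
  induction n using induction_on_primes with
  | zero => intro A h; omega
  | one => intro A _ _ h; simpa using h
  | prime_mul p a hp ih =>
    intro A hn h hA
    have h1 : DivM ((q : ℤ) ^ 2) (A ^ p - 1) := by
      simpa using h.pow_sub p
    refine minkowski_prime hq hp h (ih (A ^ p) ?_ h1 ?_)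
    · rcases Nat.eq_zero_or_pos a with h0 | h0
      · simp [h0] at hn
      · exact h0
    · rw [← pow_mul]; exact hA

lemma torsion_of_mod {q : ℕ} (hq : q.Prime) (n : ℕ) (hn : 1 ≤ n) (A : M4) (hA : A ^ n = 1)
    (m : ℕ) (h : DivM q (A ^ m - 1)) : A ^ (m * q) = 1 := by
  rw [pow_mul]
  refine minkowski hq n _ hn ?_ ?_
  · rw [sq]; exact h.pow_lift
  · rw [← pow_mul, ← pow_mul, show m * (q * n) = n * (m * q) by ring, pow_mul A n, hA, one_pow]

/-- The shape of elements of the group modulo 6. -/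
def Ush (s a b c d e : ℤ) : M4 := !![s,a,0,0; 0,1,0,0; 0,b,s,0; c,d,e,1]

lemma Ush_mul (s a b c d e s' a' b' c' d' e' : ℤ) :
    Ush s a b c d e * Ush s' a' b' c' d' e' =
      Ush (s * s') (s * a' + a) (b + s * b') (c * s' + c') (c * a' + d + e * b' + d')
        (e * s' + e') := by
  ext i j
  fin_cases i <;> fin_cases j <;>
    simp [Ush, Matrix.mul_apply, Fin.sum_univ_four]

lemma Ush_div (m a b c d e : ℤ) (ha : m ∣ a) (hb : m ∣ b) (hc : m ∣ c) (hd : m ∣ d) (he : m ∣ e) :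
    DivM m (Ush 1 a b c d e - 1) := by
  intro i j
  fin_cases i <;> fin_cases j <;> simp [Ush, ha, hb, hc, hd, he]

lemma Ush_sq (s a b c d e : ℤ) (hs : s * s = 1) :
    ∃ a' b' c' d' e', Ush s a b c d e ^ 2 = Ush 1 a' b' c' d' e' := by
  rw [sq, Ush_mul, hs]
  exact ⟨_, _, _, _, _, rfl⟩

lemma Ush_pow_six (s a b c d e : ℤ) (hs : s * s = 1) : DivM 3 (Ush s a b c d e ^ 6 - 1) := by
  obtain ⟨a', b', c', d', e', h⟩ := Ush_sq s a b c d e hs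
  rw [show 6 = 2 * 3 from rfl, pow_mul, h, pow_succ, sq, Ush_mul, Ush_mul]
  simp only [mul_one, one_mul]
  apply Ush_div
  · exact ⟨a', by ring⟩
  · exact ⟨b', by ring⟩
  · exact ⟨c', by ring⟩
  · exact ⟨d' + c' * a' + e' * b', by ring⟩
  · exact ⟨e', by ring⟩

lemma Ush_pow_eight (s a b c d e : ℤ) (hs : s * s = 1) : DivM 2 (Ush s a b c d e ^ 8 - 1) := by
  obtain ⟨a', b', c', d', e', h⟩ := Ush_sq s a b c d e hs
  rw [show 8 = 2 * 2 * 2 from rfl, pow_mul, pow_mul, h, sq, sq, Ush_mul, Ush_mul]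
  simp only [mul_one, one_mul]
  apply Ush_div
  · exact ⟨2 * a', by ring⟩
  · exact ⟨2 * b', by ring⟩
  · exact ⟨2 * c', by ring⟩
  · exact ⟨2 * d' + 3 * c' * a' + 3 * e' * b', by ring⟩
  · exact ⟨2 * e', by ring⟩

lemma Gamma6nat_shape {η : M4} (h : η ∈ Gamma6nat) :
    DivM 6 (η - Ush 1 (η 0 1) (η 2 1) (η 3 0) (η 3 1) (η 3 2)) := by
  obtain ⟨-, h⟩ := h
  intro i j
  have h1 := h i j
  fin_cases i <;> fin_cases j <;> simp [Ush, pat6] at h1 ⊢ <;> omega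

lemma Gamma6bil_shape {γ : M4} (h : γ ∈ Gamma6bil) :
    ∃ s a b c d e : ℤ, s * s = 1 ∧ DivM 6 (γ - Ush s a b c d e) := by
  rcases h with h | ⟨η, h, rfl⟩
  · exact ⟨1, _, _, _, _, _, by norm_num, Gamma6nat_shape h⟩
  · have e := (Gamma6nat_shape h).mul_left zetaM
    rw [mul_sub] at e
    have : zetaM * Ush 1 (η 0 1) (η 2 1) (η 3 0) (η 3 1) (η 3 2) =
        Ush (-1) (-η 0 1) (-η 2 1) (η 3 0) (η 3 1) (η 3 2) := by
      ext i j
      fin_cases i <;> fin_cases j <;>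
        simp [Ush, zetaM, Matrix.mul_apply, Fin.sum_univ_four]
    rw [this] at e
    exact ⟨-1, _, _, _, _, _, by norm_num, e⟩

lemma DivM.of_dvd {m n : ℤ} (hmn : m ∣ n) {A : M4} (h : DivM n A) : DivM m A :=
  fun i j => hmn.trans (h i j)

lemma Gamma6bil_sq {γ : M4} (h : γ ∈ Gamma6bil) (n : ℕ) (hn : 1 ≤ n) (hγ : γ ^ n = 1) :
    γ * γ = 1 := by
  obtain ⟨s, a, b, c, d, e, hs, hD⟩ := Gamma6bil_shape h
  have h3 : γ ^ (6 * 3) = 1 := by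
    refine torsion_of_mod Nat.prime_three n hn γ hγ 6 ?_
    have h1 := ((hD.of_dvd (m := 3) (by norm_num)).pow_sub 6).add (Ush_pow_six s a b c d e hs)
    simpa using h1
  have h2 : γ ^ (8 * 2) = 1 := by
    refine torsion_of_mod Nat.prime_two n hn γ hγ 8 ?_
    have h1 := ((hD.of_dvd (m := 2) (by norm_num)).pow_sub 8).add (Ush_pow_eight s a b c d e hs)
    simpa using h1
  rw [show 6 * 3 = 8 * 2 + 2 from rfl, pow_add, h2, one_mul, sq] at h3
  exact h3

lemma Gamma6bil_symp {γ : M4} (h : γ ∈ Gamma6bil) : γᵀ * J4 * γ = J4 := by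
  rcases h with h | ⟨η, h, rfl⟩
  · exact h.1
  · have h1 : ηᵀ * J4 * η = J4 := h.1
    have hz : zetaMᵀ * J4 * zetaM = J4 := by decide
    calc (zetaM * η)ᵀ * J4 * (zetaM * η) = ηᵀ * (zetaMᵀ * J4 * zetaM) * η := by
          rw [Matrix.transpose_mul]; simp only [Matrix.mul_assoc]
      _ = J4 := by rw [hz, h1]

lemma Gamma6bil_ne_neg {γ : M4} (h : γ ∈ Gamma6bil) : γ ≠ -1 := by
  obtain ⟨s, a, b, c, d, e, hs, hD⟩ := Gamma6bil_shape h
  rintro rfl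
  have := hD 1 1
  simp [Ush] at this

/-- The symplectic form. -/
def om (x y : Fin 4 → ℤ) : ℤ := x ⬝ᵥ (J4 *ᵥ y)

lemma om_eq (x y : Fin 4 → ℤ) : om x y = x 0 * y 2 + x 1 * y 3 - x 2 * y 0 - x 3 * y 1 := by
  simp [om, J4, dotProduct, Matrix.mulVec, Fin.sum_univ_four]
  ring

lemma om_add_left (x y z : Fin 4 → ℤ) : om (x + y) z = om x z + om y z := by simp [om_eq]; ring
lemma om_add_right (x y z : Fin 4 → ℤ) : om x (y + z) = om x y + om x z := by simp [om_eq]; ring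
lemma om_smul_left (k : ℤ) (x z : Fin 4 → ℤ) : om (k • x) z = k * om x z := by simp [om_eq]; ring
lemma om_smul_right (k : ℤ) (x z : Fin 4 → ℤ) : om x (k • z) = k * om x z := by simp [om_eq]; ring
lemma om_neg_right (x z : Fin 4 → ℤ) : om x (-z) = - om x z := by simp [om_eq]; ring
lemma om_neg_left (x z : Fin 4 → ℤ) : om (-x) z = - om x z := by simp [om_eq]; ring
lemma om_swap (x z : Fin 4 → ℤ) : om x z = - om z x := by simp [om_eq]; ring
lemma om_self (x : Fin 4 → ℤ) : om x x = 0 := by simp [om_eq]; ring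

lemma om_symp {γ : M4} (h : γᵀ * J4 * γ = J4) (x y : Fin 4 → ℤ) :
    om (γ *ᵥ x) (γ *ᵥ y) = om x y := by
  unfold om
  rw [← Matrix.vecMul_transpose γ x, ← Matrix.dotProduct_mulVec, Matrix.mulVec_mulVec,
    Matrix.mulVec_mulVec, h]

lemma om_adj {γ : M4} (h : γᵀ * J4 * γ = J4) (h2 : γ * γ = 1) (x y : Fin 4 → ℤ) :
    om (γ *ᵥ x) y = om x (γ *ᵥ y) := by
  rw [← om_symp h x (γ *ᵥ y), Matrix.mulVec_mulVec, h2, Matrix.one_mulVec]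

/-- Every nonzero integer vector is a multiple of a primitive one. -/
lemma exists_primitive (u : Fin 4 → ℤ) (hu : u ≠ 0) :
    ∃ (k : ℤ) (t s : Fin 4 → ℤ), k ≠ 0 ∧ u = k • t ∧ om s t = 1 := by
  obtain ⟨k, hk⟩ := (IsPrincipalIdealRing.principal (Ideal.span (Set.range u))).principal
  have hdiv : ∀ i, k ∣ u i := by
    intro i
    have : u i ∈ Ideal.span (Set.range u) := Ideal.subset_span ⟨i, rfl⟩
    rw [hk] at this
    exact Ideal.mem_span_singleton.1 this
  choose t ht using hdiv
  have hut : u = k • t := by ext i; simpa using ht i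
  have hk0 : k ≠ 0 := by
    rintro rfl
    exact hu (by simpa using hut)
  have hmem : k ∈ Ideal.span (Set.range u) := by
    rw [hk]; exact Ideal.mem_span_singleton_self k
  obtain ⟨c, hc⟩ := Ideal.mem_span_range_iff_exists_fun.1 hmem
  rw [Fin.sum_univ_four, ht 0, ht 1, ht 2, ht 3] at hc
  have h1 : c 0 * t 0 + c 1 * t 1 + c 2 * t 2 + c 3 * t 3 = 1 := by
    apply mul_left_cancel₀ hk0
    linear_combination hc
  refine ⟨k, t, ![c 2, c 3, -c 0, -c 1], hk0, hut, ?_⟩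
  rw [om_eq]
  simp
  linear_combination h1

/-- Assembling the conjugating matrix. -/
lemma assemble {γ T P : M4} (hP : Pᵀ * J4 * P = J4) (hT : Pᵀ * J4 * γ * P = J4 * T) :
    ∃ δ δ' : M4, δ ∈ Sp4Z ∧ δ * δ' = 1 ∧ δ' * δ = 1 ∧ δ * γ * δ' = T := by
  have hJ : -J4 * J4 = 1 := by decide
  have h1 : (-J4 * Pᵀ * J4) * P = 1 := by
    rw [Matrix.mul_assoc (-J4), Matrix.mul_assoc (-J4), hP, hJ]
  have h2 : P * (-J4 * Pᵀ * J4) = 1 := mul_eq_one_comm.1 h1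
  refine ⟨-J4 * Pᵀ * J4, P, ?_, h1, h2, ?_⟩
  · generalize -J4 * Pᵀ * J4 = Q at h1 h2
    change Qᵀ * J4 * Q = J4
    calc Qᵀ * J4 * Q = Qᵀ * (Pᵀ * J4 * P) * Q := by rw [hP]
      _ = (P * Q)ᵀ * J4 * (P * Q) := by
        rw [Matrix.transpose_mul]; simp only [Matrix.mul_assoc]
      _ = J4 := by rw [h2]; simp
  · calc -J4 * Pᵀ * J4 * γ * P = -J4 * (Pᵀ * J4 * γ * P) := by
          simp only [Matrix.mul_assoc]
      _ = (-J4 * J4) * T := by rw [hT, Matrix.mul_assoc]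
      _ = T := by rw [hJ, Matrix.one_mul]

/-- Matrix with prescribed columns. -/
def colM (f : Fin 4 → Fin 4 → ℤ) : M4 := Matrix.of fun i j => f j i

lemma colM_form (f : Fin 4 → Fin 4 → ℤ) (i j : Fin 4) :
    ((colM f)ᵀ * J4 * colM f) i j = om (f i) (f j) := by
  rw [Matrix.mul_assoc]
  rfl

lemma colM_form' (f : Fin 4 → Fin 4 → ℤ) (γ : M4) (i j : Fin 4) :
    ((colM f)ᵀ * J4 * γ * colM f) i j = om (f i) (γ *ᵥ f j) := by
  rw [Matrix.mul_assoc, Matrix.mul_assoc]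
  unfold om
  rw [Matrix.mulVec_mulVec, ← Matrix.mul_assoc J4 γ]
  rfl

lemma build {γ : M4} (hs : γᵀ * J4 * γ = J4) (h2 : γ * γ = 1) (ε : ℤ)
    (v w t s : Fin 4 → ℤ) (hv : γ *ᵥ v = -v) (ht : γ *ᵥ t = t)
    (hw : γ *ᵥ w = -w + ε • t) (hwv : om w v = 1) (hwt : om w t = 0) (hst : om s t = 1) :
    ∃ δ δ' : M4, δ ∈ Sp4Z ∧ δ * δ' = 1 ∧ δ' * δ = 1 ∧ δ * γ * δ' = zetaM * Hmat 0 ε 0 := by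
  have hvt : om v t = 0 := by
    have := om_adj hs h2 v t
    rw [hv, ht, om_neg_left] at this
    omega
  obtain ⟨f, hf1, hf2, hf3⟩ : ∃ f, om f t = 1 ∧ om f v = 0 ∧ om f w = 0 := by
    refine ⟨s + (-(om s v)) • w + (om s w) • v, ?_, ?_, ?_⟩
    · simp only [om_add_left, om_smul_left, hst, hwt, hvt]; ring
    · simp only [om_add_left, om_smul_left, hwv, om_self]; ring
    · simp only [om_add_left, om_smul_left, om_swap v w, hwv, om_self]; ring
  have e1 : om w (γ *ᵥ f) = -0 + ε * -1 := by
    rw [← om_adj hs h2, hw, om_add_left, om_neg_left, om_smul_left, om_swap w f, om_swap t f, hf1,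
      hf3]; ring
  have e2 : om v (γ *ᵥ f) = 0 := by
    rw [← om_adj hs h2, hv, om_neg_left, om_swap v f, hf2]; ring
  have e3 : om t (γ *ᵥ f) = -1 := by
    rw [← om_adj hs h2, ht, om_swap t f, hf1]
  have e4 : om f (γ *ᵥ f) = 0 := by
    have := om_adj hs h2 f f
    rw [om_swap] at this
    omega
  have i1 : om v w = -1 := by rw [om_swap, hwv]
  have i2 : om t w = 0 := by rw [om_swap, hwt]; rfl
  have i3 : om t v = 0 := by rw [om_swap, hvt]; rfl
  have i4 : om t f = -1 := by rw [om_swap, hf1]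
  have i5 : om v f = 0 := by rw [om_swap, hf2]; rfl
  have i6 : om w f = 0 := by rw [om_swap, hf3]; rfl
  apply assemble (P := colM ![w, f, v, t])
  · ext i j
    rw [colM_form]
    fin_cases i <;> fin_cases j <;>
      simp [J4, om_self, hwv, hwt, hvt, hf1, hf2, hf3, i1, i2, i3, i4, i5, i6]
  · ext i j
    rw [colM_form']
    fin_cases i <;> fin_cases j <;>
      simp [-zsmul_eq_mul, J4, zetaM, Hmat, Matrix.mul_apply, Fin.sum_univ_four, om_self, hwv, hwt, hvt, hf1, hf2,
        hf3, i1, i2, i3, e1, e2, e3, e4, hv, ht, hw, om_add_right, om_neg_right,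
        om_smul_right]

lemma exists_mulVec_ne {A : M4} (h : A ≠ 0) : ∃ x : Fin 4 → ℤ, A *ᵥ x ≠ 0 := by
  by_contra! hc
  apply h
  ext i j
  have := congrFun (hc (Pi.single j 1)) i
  simpa using this

lemma eigen_prim {γ : M4} (σ : ℤ) (u : Fin 4 → ℤ) (hu : u ≠ 0) (h : γ *ᵥ u = σ • u) :
    ∃ (k : ℤ) (t s : Fin 4 → ℤ), u = k • t ∧ om s t = 1 ∧ γ *ᵥ t = σ • t := by
  obtain ⟨k, t, s, hk, rfl, hst⟩ := exists_primitive u hu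
  refine ⟨k, t, s, rfl, hst, ?_⟩
  rw [Matrix.mulVec_smul, smul_comm] at h
  exact smul_right_injective _ hk h

lemma involution_conj {γ : M4} (hs : γᵀ * J4 * γ = J4) (h2 : γ * γ = 1) (hne : γ ≠ 1)
    (hne' : γ ≠ -1) :
    ∃ δ δ' : M4, δ ∈ Sp4Z ∧ δ * δ' = 1 ∧ δ' * δ = 1 ∧
      (δ * γ * δ' = zetaM ∨ δ * γ * δ' = zetaM * Hmat 0 1 0) := by
  have hH : zetaM * Hmat 0 0 0 = zetaM := by decide
  -- a primitive anti-invariant vector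
  obtain ⟨v, w, hwv, hv⟩ : ∃ v w, om w v = 1 ∧ γ *ᵥ v = -v := by
    obtain ⟨x, hx⟩ := exists_mulVec_ne (sub_ne_zero.2 hne)
    obtain ⟨k, t, s, -, hst, ht⟩ := eigen_prim (γ := γ) (-1) ((γ - 1) *ᵥ x) hx (by
      rw [Matrix.mulVec_mulVec, Matrix.mul_sub, h2, ← Matrix.smul_mulVec]
      congr 1
      simp)
    exact ⟨t, s, hst, by simpa using ht⟩
  -- a primitive invariant vector
  obtain ⟨t₀, s₀, hst₀, ht₀⟩ : ∃ t s, om s t = 1 ∧ γ *ᵥ t = t := by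
    have : γ + 1 ≠ 0 := fun h => hne' (eq_neg_of_add_eq_zero_left h)
    obtain ⟨x, hx⟩ := exists_mulVec_ne this
    obtain ⟨k, t, s, -, hst, ht⟩ := eigen_prim (γ := γ) 1 ((γ + 1) *ᵥ x) hx (by
      rw [Matrix.mulVec_mulVec, Matrix.mul_add, h2, one_smul]
      congr 1
      simp [add_comm])
    exact ⟨t, s, hst, by simpa using ht⟩
  have case0 : ∀ w, om w v = 1 → γ *ᵥ w = -w → ∃ δ δ' : M4, δ ∈ Sp4Z ∧ δ * δ' = 1 ∧ δ' * δ = 1 ∧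
      (δ * γ * δ' = zetaM ∨ δ * γ * δ' = zetaM * Hmat 0 1 0) := by
    intro w hwv hw
    have hwt : om w t₀ = 0 := by
      have := om_adj hs h2 w t₀
      rw [hw, ht₀, om_neg_left] at this
      omega
    obtain ⟨δ, δ', a, b, c, d⟩ := build hs h2 0 v w t₀ s₀ hv ht₀ (by simpa using hw) hwv hwt hst₀
    exact ⟨δ, δ', a, b, c, Or.inl (by rw [d, hH])⟩
  by_cases hu : w + γ *ᵥ w = 0
  · exact case0 w hwv (eq_neg_of_add_eq_zero_right hu)
  obtain ⟨k, t, s, hkt, hst, ht⟩ := eigen_prim (γ := γ) 1 _ hu (by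
    rw [Matrix.mulVec_add, Matrix.mulVec_mulVec, h2, Matrix.one_mulVec, one_smul, add_comm])
  rw [one_smul] at ht
  have htv : om t v = 0 := by
    have := om_adj hs h2 t v
    rw [hv, ht, om_neg_right] at this
    omega
  have hγw : γ *ᵥ w = -w + k • t := by rw [← hkt]; abel
  have hwv' : ∀ m : ℤ, om (w + m • t) v = 1 := by
    intro m
    rw [om_add_left, om_smul_left, htv, hwv]; ring
  rcases Int.even_or_odd' k with ⟨m, rfl | rfl⟩
  · refine case0 (w + (-m) • t) (hwv' _) ?_
    rw [Matrix.mulVec_add, Matrix.mulVec_smul, ht, hγw]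
    module
  · have hw' : γ *ᵥ (w + (-m) • t) = -(w + (-m) • t) + (1 : ℤ) • t := by
      rw [Matrix.mulVec_add, Matrix.mulVec_smul, ht, hγw]
      module
    have hwt : om (w + (-m) • t) t = 0 := by
      have := om_adj hs h2 (w + (-m) • t) (w + (-m) • t)
      rw [om_swap, hw'] at this
      simp only [om_add_right _ (-(w + (-m) • t)), om_neg_right, om_self, om_smul_right] at this
      omega
    obtain ⟨δ, δ', a, b, c, d⟩ := build hs h2 1 v _ t s hv ht hw' (hwv' _) hwt hst
    exact ⟨δ, δ', a, b, c, Or.inr d⟩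

/-- Every finite-order element γ ≠ I₄ of Γ₆^bil is conjugate within Sp(4,ℤ)
to ζ or to ζ·[0,1;0]. -/
theorem torsion_conjugate (γ : M4) (hγ : γ ∈ Gamma6bil) (hne : γ ≠ 1)
    (hfin : ∃ n : ℕ, 1 ≤ n ∧ γ ^ n = 1) :
    ∃ δ δ' : M4, δ ∈ Sp4Z ∧ δ * δ' = 1 ∧ δ' * δ = 1 ∧
      (δ * γ * δ' = zetaM ∨ δ * γ * δ' = zetaM * Hmat 0 1 0) := by
  obtain ⟨n, hn, hγn⟩ := hfin
  exact involution_conj (Gamma6bil_symp hγ) (Gamma6bil_sq hγ n hn hγn) hne (Gamma6bil_ne_neg hγ)
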